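/- arXiv:2405.07119 — 2 statements merged into one kernel-verified Lean document; each statement's English description precedes it below -/
import Mathlib

section
/- Consider an ICQS instance with positively adequate objectives. Then every best-response sequence repeats: there exist indices k < i with x_i = x_k and y_i = y_k. Consequently the best-response algorithm terminates finitely irrespective of the initial points x_0, y_0. -/
/-!
The integer minimizer of a strictly convex quadratic lies within a distance of the continuous
minimizer `-Q⁻¹c` that depends on `Q` only (`exists_isProxBound`). Hence a best response obeys
`‖x_{i+1}‖ ≤ ‖R1 y_i‖ + K ≤ (1 - ρ)‖y_i‖ + K` for a constant `K`, and symmetrically for `y`. Any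
`B ≥ K/ρ` that bounds `‖x_0‖` and `‖y_0‖` therefore bounds both sequences, because
`(1 - ρ)B + K ≤ B`. Only finitely many integer points lie in such a ball, so a pair repeats by the
pigeonhole principle.
-/

open Matrix

/-- Coercion of an integer vector to a real vector. -/
def ic {n : ℕ} (v : Fin n → ℤ) : Fin n → ℝ := fun i => (v i : ℝ)

/-- Euclidean norm of a real vector. -/
noncomputable def euclNorm {n : ℕ} (x : Fin n → ℝ) : ℝ := Real.sqrt (∑ i, x i ^ 2)

/-- Norm of a pair of vectors: `√(‖x‖² + ‖y‖²)`. -/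
noncomputable def pairNorm {m n : ℕ} (x : Fin m → ℝ) (y : Fin n → ℝ) : ℝ :=
  Real.sqrt (euclNorm x ^ 2 + euclNorm y ^ 2)

/-- Cost of the x-player: `f1(x,y) = (1/2)xᵀQ1x + (C1 y + d1)ᵀx`. -/
noncomputable def f1 {nx ny : ℕ} (Q1 : Matrix (Fin nx) (Fin nx) ℝ)
    (C1 : Matrix (Fin nx) (Fin ny) ℝ) (d1 : Fin nx → ℝ)
    (x : Fin nx → ℝ) (y : Fin ny → ℝ) : ℝ :=
  (1 / 2) * (x ⬝ᵥ Q1 *ᵥ x) + (C1 *ᵥ y + d1) ⬝ᵥ x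

/-- Cost of the y-player: `f2(x,y) = (1/2)yᵀQ2y + (C2 x + d2)ᵀy`. -/
noncomputable def f2 {nx ny : ℕ} (Q2 : Matrix (Fin ny) (Fin ny) ℝ)
    (C2 : Matrix (Fin ny) (Fin nx) ℝ) (d2 : Fin ny → ℝ)
    (x : Fin nx → ℝ) (y : Fin ny → ℝ) : ℝ :=
  (1 / 2) * (y ⬝ᵥ Q2 *ᵥ y) + (C2 *ᵥ x + d2) ⬝ᵥ y

/-- `P` is a proximity bound for `Q`: every integer minimizer of
`(1/2)xᵀQx + cᵀx` is within distance `P` of the continuous minimizer `-Q⁻¹c`. -/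
def IsProxBound {n : ℕ} (Q : Matrix (Fin n) (Fin n) ℝ) (P : ℝ) : Prop :=
  0 ≤ P ∧ ∀ (c : Fin n → ℝ) (v : Fin n → ℤ),
    (∀ w : Fin n → ℤ,
      (1 / 2) * (ic v ⬝ᵥ Q *ᵥ ic v) + c ⬝ᵥ ic v ≤
      (1 / 2) * (ic w ⬝ᵥ Q *ᵥ ic w) + c ⬝ᵥ ic w) →
    euclNorm (ic v + Q⁻¹ *ᵥ c) ≤ P

lemma euclNorm_eq {n : ℕ} (x : Fin n → ℝ) : euclNorm x = ‖WithLp.toLp 2 x‖ := by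
  simp [euclNorm, EuclideanSpace.norm_eq]

lemma euclNorm_nonneg {n : ℕ} (x : Fin n → ℝ) : 0 ≤ euclNorm x := Real.sqrt_nonneg _

lemma euclNorm_sub_le {n : ℕ} (x y : Fin n → ℝ) :
    euclNorm (x - y) ≤ euclNorm x + euclNorm y := by
  simp only [euclNorm_eq, WithLp.toLp_sub]
  exact norm_sub_le _ _

lemma euclNorm_add_le {n : ℕ} (x y : Fin n → ℝ) :
    euclNorm (x + y) ≤ euclNorm x + euclNorm y := by
  simp only [euclNorm_eq, WithLp.toLp_add]
  exact norm_add_le _ _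

lemma abs_le_euclNorm {n : ℕ} (x : Fin n → ℝ) (i : Fin n) : |x i| ≤ euclNorm x := by
  rw [euclNorm, ← Real.sqrt_sq_eq_abs]
  exact Real.sqrt_le_sqrt
    (Finset.single_le_sum (f := fun i => x i ^ 2) (fun j _ => sq_nonneg _) (Finset.mem_univ i))

lemma euclNorm_le_sum {n : ℕ} (x b : Fin n → ℝ) (h : ∀ i, |x i| ≤ b i) :
    euclNorm x ≤ ∑ i, b i := by
  have hb : ∀ i, 0 ≤ b i := fun i => (abs_nonneg _).trans (h i)
  rw [euclNorm]
  refine Real.sqrt_le_iff.2 ⟨Finset.sum_nonneg fun i _ => hb i, ?_⟩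
  calc ∑ i, x i ^ 2 ≤ ∑ i, b i ^ 2 := Finset.sum_le_sum fun i _ => sq_le_sq' (by
          linarith [neg_abs_le (x i), h i]) ((le_abs_self _).trans (h i))
    _ ≤ (∑ i, b i) ^ 2 := Finset.sum_sq_le_sq_sum_of_nonneg fun i _ => hb i

lemma dotProduct_mulVec_symm {n : ℕ} {Q : Matrix (Fin n) (Fin n) ℝ} (hQ : Q.PosDef)
    (u w : Fin n → ℝ) : u ⬝ᵥ Q *ᵥ w = w ⬝ᵥ Q *ᵥ u := by
  have hT : Qᵀ = Q := by simpa [Matrix.IsHermitian] using hQ.isHermitian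
  rw [dotProduct_mulVec, ← mulVec_transpose, hT, dotProduct_comm]

lemma quadForm_nonneg {n : ℕ} {Q : Matrix (Fin n) (Fin n) ℝ} (hQ : Q.PosDef)
    (u : Fin n → ℝ) : 0 ≤ u ⬝ᵥ Q *ᵥ u := by
  simpa using hQ.posSemidef.dotProduct_mulVec_nonneg u

lemma mulVec_inv_mulVec {n : ℕ} {Q : Matrix (Fin n) (Fin n) ℝ} (hQ : Q.PosDef)
    (c : Fin n → ℝ) : Q *ᵥ (Q⁻¹ *ᵥ c) = c := by
  rw [mulVec_mulVec, mul_nonsing_inv _ hQ.det_pos.ne'.isUnit, one_mulVec]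

/-- Completing the square around the continuous minimizer `-Q⁻¹c`. -/
lemma complete_square {n : ℕ} {Q : Matrix (Fin n) (Fin n) ℝ} (hQ : Q.PosDef)
    (c v : Fin n → ℝ) :
    (v + Q⁻¹ *ᵥ c) ⬝ᵥ Q *ᵥ (v + Q⁻¹ *ᵥ c) =
      2 * ((1 / 2) * (v ⬝ᵥ Q *ᵥ v) + c ⬝ᵥ v) + (Q⁻¹ *ᵥ c) ⬝ᵥ c := by
  have h := dotProduct_mulVec_symm hQ (Q⁻¹ *ᵥ c) v
  rw [mulVec_add, mulVec_inv_mulVec hQ] at *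
  simp only [add_dotProduct, dotProduct_add]
  rw [h, dotProduct_comm v c]
  ring

/-- Coordinates are controlled by the quadratic form: expand the form at `u ∓ Q⁻¹eᵢ`, where it is
nonnegative. -/
lemma abs_coord_le {n : ℕ} {Q : Matrix (Fin n) (Fin n) ℝ} (hQ : Q.PosDef)
    (u : Fin n → ℝ) (i : Fin n) : 2 * |u i| ≤ u ⬝ᵥ Q *ᵥ u + (Q⁻¹ *ᵥ Pi.single i 1) i := by
  have h1 := quadForm_nonneg hQ (u - Q⁻¹ *ᵥ Pi.single i 1)
  have h2 := quadForm_nonneg hQ (u + Q⁻¹ *ᵥ Pi.single i 1)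
  have h := dotProduct_mulVec_symm hQ (Q⁻¹ *ᵥ Pi.single i 1) u
  rw [mulVec_inv_mulVec hQ] at h
  rw [mulVec_sub, mulVec_inv_mulVec hQ, sub_dotProduct, dotProduct_sub, dotProduct_sub, h] at h1
  rw [mulVec_add, mulVec_inv_mulVec hQ, add_dotProduct, dotProduct_add, dotProduct_add, h] at h2
  simp only [dotProduct_single, mul_one] at h1 h2
  rcases abs_cases (u i) with ⟨h, _⟩ | ⟨h, _⟩ <;> rw [h] <;> linarith

lemma quadForm_le {n : ℕ} (Q : Matrix (Fin n) (Fin n) ℝ) (z : Fin n → ℝ)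
    (hz : ∀ i, |z i| ≤ 1) : z ⬝ᵥ Q *ᵥ z ≤ ∑ i, ∑ j, |Q i j| := by
  simp only [dotProduct, mulVec, Finset.mul_sum]
  refine Finset.sum_le_sum fun i _ => Finset.sum_le_sum fun j _ => ?_
  calc z i * (Q i j * z j) ≤ |z i * (Q i j * z j)| := le_abs_self _
    _ = |z i| * (|Q i j| * |z j|) := by rw [abs_mul, abs_mul]
    _ ≤ 1 * (|Q i j| * 1) := by gcongr <;> exact hz _
    _ = |Q i j| := by ring

/-- A bound on the distance between integer and continuous minimizers, uniform in the linear term: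
the integer minimizer is compared with the rounding of `-Q⁻¹c`. -/
lemma exists_isProxBound {n : ℕ} {Q : Matrix (Fin n) (Fin n) ℝ} (hQ : Q.PosDef) :
    ∃ P, IsProxBound Q P := by
  have key : ∀ (c : Fin n → ℝ) (v : Fin n → ℤ),
      (∀ w : Fin n → ℤ,
        (1 / 2) * (ic v ⬝ᵥ Q *ᵥ ic v) + c ⬝ᵥ ic v ≤
        (1 / 2) * (ic w ⬝ᵥ Q *ᵥ ic w) + c ⬝ᵥ ic w) →
      euclNorm (ic v + Q⁻¹ *ᵥ c) ≤
        ∑ i, ((∑ i, ∑ j, |Q i j|) + (Q⁻¹ *ᵥ Pi.single i 1) i) / 2 := by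
    intro c v hv
    refine euclNorm_le_sum _ _ fun i => ?_
    have h1 := abs_coord_le hQ (ic v + Q⁻¹ *ᵥ c) i
    have h2 := hv fun j => round (-(Q⁻¹ *ᵥ c) j)
    have h3 := quadForm_le Q (ic (fun j => round (-(Q⁻¹ *ᵥ c) j)) + Q⁻¹ *ᵥ c) fun j => by
      have := abs_sub_round (-(Q⁻¹ *ᵥ c) j)
      rw [← abs_neg] at this
      simp only [ic, Pi.add_apply]
      rw [show (round (-(Q⁻¹ *ᵥ c) j) : ℝ) + (Q⁻¹ *ᵥ c) j
        = -(-(Q⁻¹ *ᵥ c) j - round (-(Q⁻¹ *ᵥ c) j)) by ring]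
      linarith
    rw [complete_square hQ] at h1 h3
    linarith
  refine ⟨_, ?_, key⟩
  refine Finset.sum_nonneg fun i _ => ?_
  have h := abs_coord_le hQ 0 i
  simp only [Pi.zero_apply, abs_zero, mul_zero, zero_dotProduct, zero_add] at h
  have : 0 ≤ ∑ i, ∑ j, |Q i j| :=
    Finset.sum_nonneg fun i _ => Finset.sum_nonneg fun j _ => abs_nonneg _
  linarith

/-- One best-response step contracts the opponent's norm up to an additive constant. -/
lemma euclNorm_best_response_le {n m : ℕ} {Q : Matrix (Fin n) (Fin n) ℝ} {P r : ℝ}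
    (hP : IsProxBound Q P) (C : Matrix (Fin n) (Fin m) ℝ) (d : Fin n → ℝ)
    (hR : ∀ v : Fin m → ℝ, euclNorm ((Q⁻¹ * C) *ᵥ v) ≤ r * euclNorm v)
    (y : Fin m → ℝ) (v : Fin n → ℤ)
    (hv : ∀ w : Fin n → ℤ,
      (1 / 2) * (ic v ⬝ᵥ Q *ᵥ ic v) + (C *ᵥ y + d) ⬝ᵥ ic v ≤
      (1 / 2) * (ic w ⬝ᵥ Q *ᵥ ic w) + (C *ᵥ y + d) ⬝ᵥ ic w) :
    euclNorm (ic v) ≤ r * euclNorm y + (P + euclNorm (Q⁻¹ *ᵥ d)) := by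
  have h := hP.2 _ v hv
  have e : ic v = (ic v + Q⁻¹ *ᵥ (C *ᵥ y + d)) - ((Q⁻¹ * C) *ᵥ y + Q⁻¹ *ᵥ d) := by
    rw [mulVec_add, mulVec_mulVec]; abel
  have h1 := euclNorm_sub_le (ic v + Q⁻¹ *ᵥ (C *ᵥ y + d)) ((Q⁻¹ * C) *ᵥ y + Q⁻¹ *ᵥ d)
  rw [← e] at h1
  have h2 := euclNorm_add_le ((Q⁻¹ * C) *ᵥ y) (Q⁻¹ *ᵥ d)
  linarith [hR y]

lemma finite_euclNorm_le (n : ℕ) (B : ℝ) : {v : Fin n → ℤ | euclNorm (ic v) ≤ B}.Finite := by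
  refine (Set.finite_Icc (fun _ => -⌈B⌉) (fun _ => ⌈B⌉)).subset fun v hv => ?_
  have h : ∀ i, |v i| ≤ ⌈B⌉ := fun i => by
    have h1 : |(v i : ℝ)| ≤ ⌈B⌉ := ((abs_le_euclNorm (ic v) i).trans hv).trans (Int.le_ceil B)
    exact_mod_cast h1
  exact ⟨fun i => (abs_le.1 (h i)).1, fun i => (abs_le.1 (h i)).2⟩

/-- With positively adequate objectives, every best-response sequence repeats a
pair of strategies, so the best-response algorithm terminates finitely. -/
theorem best_response_terminates {nx ny : ℕ}
    (Q1 : Matrix (Fin nx) (Fin nx) ℝ) (Q2 : Matrix (Fin ny) (Fin ny) ℝ)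
    (hQ1 : Q1.PosDef) (hQ2 : Q2.PosDef)
    (C1 : Matrix (Fin nx) (Fin ny) ℝ) (C2 : Matrix (Fin ny) (Fin nx) ℝ)
    (d1 : Fin nx → ℝ) (d2 : Fin ny → ℝ)
    (ρ : ℝ) (hρ0 : 0 < ρ) (hρ1 : ρ ≤ 1)
    (hR1 : ∀ v : Fin ny → ℝ, euclNorm ((Q1⁻¹ * C1) *ᵥ v) ≤ (1 - ρ) * euclNorm v)
    (hR2 : ∀ w : Fin nx → ℝ, euclNorm ((Q2⁻¹ * C2) *ᵥ w) ≤ (1 - ρ) * euclNorm w)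
    (X : ℕ → Fin nx → ℤ) (Y : ℕ → Fin ny → ℤ)
    (hBRx : ∀ i, ∀ w : Fin nx → ℤ,
      f1 Q1 C1 d1 (ic (X (i + 1))) (ic (Y i)) ≤ f1 Q1 C1 d1 (ic w) (ic (Y i)))
    (hBRy : ∀ i, ∀ w : Fin ny → ℤ,
      f2 Q2 C2 d2 (ic (X i)) (ic (Y (i + 1))) ≤ f2 Q2 C2 d2 (ic (X i)) (ic w)) :
    ∃ k i, k < i ∧ X i = X k ∧ Y i = Y k := by
  obtain ⟨P1, hP1⟩ := exists_isProxBound hQ1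
  obtain ⟨P2, hP2⟩ := exists_isProxBound hQ2
  have sx : ∀ i, _ := fun i =>
    euclNorm_best_response_le hP1 C1 d1 hR1 (ic (Y i)) (X (i + 1)) (hBRx i)
  have sy : ∀ i, _ := fun i =>
    euclNorm_best_response_le hP2 C2 d2 hR2 (ic (X i)) (Y (i + 1)) (hBRy i)
  set K1 := P1 + euclNorm (Q1⁻¹ *ᵥ d1)
  set K2 := P2 + euclNorm (Q2⁻¹ *ᵥ d2)
  obtain ⟨B, hB⟩ : ∃ B, euclNorm (ic (X 0)) ≤ B ∧ euclNorm (ic (Y 0)) ≤ B ∧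
      K1 / ρ ≤ B ∧ K2 / ρ ≤ B :=
    ⟨max (max (euclNorm (ic (X 0))) (euclNorm (ic (Y 0)))) (max (K1 / ρ) (K2 / ρ)),
      by simp, by simp, by simp, by simp⟩
  obtain ⟨hx0, hy0, hK1, hK2⟩ := hB
  rw [div_le_iff₀ hρ0] at hK1 hK2
  have bd : ∀ i, euclNorm (ic (X i)) ≤ B ∧ euclNorm (ic (Y i)) ≤ B := by
    intro i
    induction i with
    | zero => exact ⟨hx0, hy0⟩
    | succ i ih =>
      have h1 := mul_le_mul_of_nonneg_left ih.1 (sub_nonneg.2 hρ1)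
      have h2 := mul_le_mul_of_nonneg_left ih.2 (sub_nonneg.2 hρ1)
      exact ⟨by linarith [sx i], by linarith [sy i]⟩
  obtain ⟨a, -, b, -, hne, hab⟩ := Set.infinite_univ.exists_ne_map_eq_of_mapsTo
    (f := fun i => (X i, Y i)) (fun i _ => Set.mk_mem_prod (bd i).1 (bd i).2)
    ((finite_euclNorm_le nx B).prod (finite_euclNorm_le ny B))
  obtain ⟨hX, hY⟩ := Prod.ext_iff.1 hab
  rcases hne.lt_or_gt with h | h
  · exact ⟨a, b, h, hX.symm, hY.symm⟩
  · exact ⟨b, a, h, hX, hY⟩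
end

section
/- Consider an ICQS instance with positively adequate objectives with margin ρ ∈ (0,1], and define the continuous best-response map F : ℝ^{n_x} × ℝ^{n_y} → ℝ^{n_x} × ℝ^{n_y} by F(x,y) = (−Q1⁻¹(C1y + d1), −Q2⁻¹(C2x + d2)). Then: (a) F is a contraction with Lipschitz constant at most 1−ρ with respect to the norm ‖(x,y)‖ = sqrt(‖x‖² + ‖y‖²); (b) F has a unique fixed point (x*, y*), which satisfies that x* is the unique minimizer of f1(·, y*) over ℝ^{n_x} and y* is the unique minimizer of f2(x*, ·) over ℝ^{n_y} (i.e., (x*,y*) is a pure-strategy Nash equilibrium of the continuous game); and (c) for every initial point (x_0, y_0) ∈ ℝ^{n_x} × ℝ^{n_y}, the iterates Fⁱ(x_0, y_0) converge to (x*, y*). -/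
/-!
Since the constant terms `d1`, `d2` cancel, a difference of two values of `F` is
`(-R1 (y - y'), -R2 (x - x'))`, so the two operator bounds give the `(1 - ρ)`-contraction in the
pair norm. That norm makes `ℝ^nx × ℝ^ny` a complete `ℓ²` product, and the Banach fixed point theorem
(`exists_fixedPoint_of_contracting`) supplies the unique, globally attracting fixed point. A fixed
point consists of mutual best responses because `-Q⁻¹c` is the strict minimizer of
`(1/2)xᵀQx + cᵀx` (`quadratic_lt_of_ne`).
-/

open Matrix

/-- The pair norm is the norm of the `ℓ²` product of two Euclidean spaces, which is complete. -/
lemma pairNorm_eq_norm {m n : ℕ} (x : Fin m → ℝ) (y : Fin n → ℝ) :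
    pairNorm x y = ‖WithLp.toLp 2 (WithLp.toLp 2 x, WithLp.toLp 2 y)‖ := by
  simp [pairNorm, euclNorm, WithLp.prod_norm_eq_of_L2, EuclideanSpace.norm_eq]

lemma euclNorm_neg {n : ℕ} (x : Fin n → ℝ) : euclNorm (-x) = euclNorm x := by
  simp [euclNorm]

/-- A positive definite quadratic has `-Q⁻¹c` as its strict global minimizer: with
`h = x + Q⁻¹c`, the gap between the value at `x` and the minimum is `(1/2)hᵀQh`. -/
lemma quadratic_lt_of_ne {n : ℕ} {Q : Matrix (Fin n) (Fin n) ℝ} (hQ : Q.PosDef)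
    (c x s : Fin n → ℝ) (hs : s = -(Q⁻¹ *ᵥ c)) (hx : x ≠ s) :
    (1 / 2) * (s ⬝ᵥ Q *ᵥ s) + c ⬝ᵥ s < (1 / 2) * (x ⬝ᵥ Q *ᵥ x) + c ⬝ᵥ x := by
  have hdet : IsUnit Q.det := (Matrix.isUnit_iff_isUnit_det Q).1 hQ.isUnit
  have hQs : Q *ᵥ s = -c := by
    rw [hs, Matrix.mulVec_neg, Matrix.mulVec_mulVec, Matrix.mul_nonsing_inv _ hdet,
      Matrix.one_mulVec]
  have hpos : 0 < (x - s) ⬝ᵥ Q *ᵥ (x - s) := by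
    simpa using hQ.dotProduct_mulVec_pos (sub_ne_zero.2 hx)
  have hsym : s ⬝ᵥ Q *ᵥ x = -(c ⬝ᵥ x) := by
    have hT : Qᵀ = Q := by simpa using hQ.isHermitian.eq
    rw [Matrix.dotProduct_mulVec, ← Matrix.mulVec_transpose, hT, hQs, neg_dotProduct]
  have hxs : x ⬝ᵥ Q *ᵥ s = -(c ⬝ᵥ x) := by
    rw [hQs, dotProduct_neg, dotProduct_comm]
  have hss : s ⬝ᵥ Q *ᵥ s = -(c ⬝ᵥ s) := by
    rw [hQs, dotProduct_neg, dotProduct_comm]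
  rw [Matrix.mulVec_sub, dotProduct_sub, sub_dotProduct, sub_dotProduct, hsym, hxs, hss] at hpos
  rw [hss]
  linarith

/-- A map that contracts the pair norm has a unique fixed point attracting every orbit: this is
the Banach fixed point theorem, transported from the `ℓ²` product. -/
lemma exists_fixedPoint_of_contracting {m n : ℕ} {k : ℝ} (hk0 : 0 ≤ k) (hk1 : k < 1)
    (F : (Fin m → ℝ) × (Fin n → ℝ) → (Fin m → ℝ) × (Fin n → ℝ))
    (hF : ∀ z w, pairNorm ((F z).1 - (F w).1) ((F z).2 - (F w).2) ≤
      k * pairNorm (z.1 - w.1) (z.2 - w.2)) :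
    ∃ zs, F zs = zs ∧ (∀ z, F z = z → z = zs) ∧
      ∀ z0, Filter.Tendsto
        (fun i => pairNorm ((F^[i] z0).1 - zs.1) ((F^[i] z0).2 - zs.2))
        Filter.atTop (nhds 0) := by
  let E := WithLp 2 (EuclideanSpace ℝ (Fin m) × EuclideanSpace ℝ (Fin n))
  let e : (Fin m → ℝ) × (Fin n → ℝ) → E :=
    fun z => WithLp.toLp 2 (WithLp.toLp 2 z.1, WithLp.toLp 2 z.2)
  let e' : E → (Fin m → ℝ) × (Fin n → ℝ) := fun z => (z.fst.ofLp, z.snd.ofLp)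
  have hee : ∀ z, e (e' z) = z := fun z => rfl
  have hee' : ∀ z, e' (e z) = z := fun z => rfl
  have hdist : ∀ z w, dist (e z) (e w) = pairNorm (z.1 - w.1) (z.2 - w.2) := by
    intro z w
    rw [dist_eq_norm, pairNorm_eq_norm]
    rfl
  let G : E → E := fun z => e (F (e' z))
  have hG : ContractingWith ⟨k, hk0⟩ G := by
    refine ⟨by exact_mod_cast hk1, LipschitzWith.of_dist_le_mul fun z w => ?_⟩
    have h := hF (e' z) (e' w)
    rw [← hdist, ← hdist, hee, hee] at h
    exact h
  have hsemi : Function.Semiconj e F G := fun z => by simp only [G, hee']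
  refine ⟨e' (ContractingWith.fixedPoint G hG), ?_, fun z hz => ?_, fun z0 => ?_⟩
  · have h := congrArg e' hG.fixedPoint_isFixedPt.eq
    exact h
  · have h : Function.IsFixedPt G (e z) := by
      rw [Function.IsFixedPt, ← hsemi.eq, hz]
    rw [← hG.fixedPoint_unique h, hee']
  · have h := tendsto_iff_dist_tendsto_zero.1 (hG.tendsto_iterate_fixedPoint (e z0))
    refine h.congr fun i => ?_
    rw [← (hsemi.iterate_right i).eq, ← hdist, hee]

/-- With positively adequate objectives (margin ρ), the continuous best-response
map is a `(1-ρ)`-contraction, has a unique fixed point, which is the PNE of the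
continuous game, and the best-response iterates converge to it from any start. -/
theorem continuous_BR_converges {nx ny : ℕ}
    (Q1 : Matrix (Fin nx) (Fin nx) ℝ) (Q2 : Matrix (Fin ny) (Fin ny) ℝ)
    (hQ1 : Q1.PosDef) (hQ2 : Q2.PosDef)
    (C1 : Matrix (Fin nx) (Fin ny) ℝ) (C2 : Matrix (Fin ny) (Fin nx) ℝ)
    (d1 : Fin nx → ℝ) (d2 : Fin ny → ℝ)
    (ρ : ℝ) (hρ0 : 0 < ρ) (hρ1 : ρ ≤ 1)
    (hR1 : ∀ v : Fin ny → ℝ, euclNorm ((Q1⁻¹ * C1) *ᵥ v) ≤ (1 - ρ) * euclNorm v)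
    (hR2 : ∀ w : Fin nx → ℝ, euclNorm ((Q2⁻¹ * C2) *ᵥ w) ≤ (1 - ρ) * euclNorm w)
    (F : (Fin nx → ℝ) × (Fin ny → ℝ) → (Fin nx → ℝ) × (Fin ny → ℝ))
    (hF : ∀ z, F z = (-(Q1⁻¹ *ᵥ (C1 *ᵥ z.2 + d1)), -(Q2⁻¹ *ᵥ (C2 *ᵥ z.1 + d2)))) :
    (∀ z w, pairNorm ((F z).1 - (F w).1) ((F z).2 - (F w).2) ≤
      (1 - ρ) * pairNorm (z.1 - w.1) (z.2 - w.2)) ∧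
    ∃ zs : (Fin nx → ℝ) × (Fin ny → ℝ),
      F zs = zs ∧ (∀ z, F z = z → z = zs) ∧
      (∀ x : Fin nx → ℝ, x ≠ zs.1 →
        f1 Q1 C1 d1 zs.1 zs.2 < f1 Q1 C1 d1 x zs.2) ∧
      (∀ y : Fin ny → ℝ, y ≠ zs.2 →
        f2 Q2 C2 d2 zs.1 zs.2 < f2 Q2 C2 d2 zs.1 y) ∧
      (∀ z0, Filter.Tendsto
        (fun i => pairNorm ((F^[i] z0).1 - zs.1) ((F^[i] z0).2 - zs.2))
        Filter.atTop (nhds 0)) := by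
  have hk0 : 0 ≤ 1 - ρ := by linarith
  have hcontr : ∀ z w, pairNorm ((F z).1 - (F w).1) ((F z).2 - (F w).2) ≤
      (1 - ρ) * pairNorm (z.1 - w.1) (z.2 - w.2) := by
    intro z w
    have e1 : (F z).1 - (F w).1 = -((Q1⁻¹ * C1) *ᵥ (z.2 - w.2)) := by
      simp only [hF, ← Matrix.mulVec_mulVec, Matrix.mulVec_sub, Matrix.mulVec_add]
      abel
    have e2 : (F z).2 - (F w).2 = -((Q2⁻¹ * C2) *ᵥ (z.1 - w.1)) := by
      simp only [hF, ← Matrix.mulVec_mulVec, Matrix.mulVec_sub, Matrix.mulVec_add]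
      abel
    rw [e1, e2]
    unfold pairNorm
    rw [euclNorm_neg, euclNorm_neg]
    have h1 := pow_le_pow_left₀ (euclNorm_nonneg _) (hR1 (z.2 - w.2)) 2
    have h2 := pow_le_pow_left₀ (euclNorm_nonneg _) (hR2 (z.1 - w.1)) 2
    rw [← Real.sqrt_sq hk0, ← Real.sqrt_mul (sq_nonneg _)]
    apply Real.sqrt_le_sqrt
    linarith
  obtain ⟨zs, hfix, huniq, hlim⟩ :=
    exists_fixedPoint_of_contracting hk0 (by linarith) F hcontr
  have hzs := hF zs
  rw [hfix] at hzs
  exact ⟨hcontr, zs, hfix, huniq,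
    fun x hx => quadratic_lt_of_ne hQ1 _ x _ (congrArg Prod.fst hzs) hx,
    fun y hy => quadratic_lt_of_ne hQ2 _ y _ (congrArg Prod.snd hzs) hy, hlim⟩
end
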